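/- Let M be the product of a reduced sequence of t matrices, each taken from {V₁, V₂, V₃, V₁⁻¹, V₂⁻¹, V₃⁻¹}. Then there exist Gaussian integers u, v such that M = (1/√(5^t))·[[u, −conj(v)], [v, conj(u)]], and there is no natural number s < t for which there exist Gaussian integers u', v' with M = (1/√(5^s))·[[u', −conj(v')], [v', conj(u')]]. -/

import Mathlib

open Matrix

/-- The Pauli matrices `X, Y, Z`. -/
def Pauli : Fin 3 → Matrix (Fin 2) (Fin 2) ℂ :=
  ![!![0, 1; 1, 0], !![0, -Complex.I; Complex.I, 0], !![1, 0; 0, -1]]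

/-- `V₁ = (I + 2iX)/√5`, `V₂ = (I + 2iY)/√5`, `V₃ = (I + 2iZ)/√5`. -/
noncomputable def Vgen (i : Fin 3) : Matrix (Fin 2) (Fin 2) ℂ :=
  ((Real.sqrt 5 : ℝ) : ℂ)⁻¹ • (1 + (2 * Complex.I) • Pauli i)

/-- The factor corresponding to the letter `(i, b)`: `Vᵢ` if `b = true`,
`Vᵢ⁻¹` if `b = false`. -/
noncomputable def VgenLetter (p : Fin 3 × Bool) : Matrix (Fin 2) (Fin 2) ℂ :=
  if p.2 then Vgen p.1 else (Vgen p.1)⁻¹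

/-- A Gaussian integer: a complex number with integer real and imaginary parts. -/
def IsGaussian (z : ℂ) : Prop := ∃ a b : ℤ, z = (a : ℂ) + (b : ℂ) * Complex.I

/-!
`√5 Vᵢ` represents an integer quaternion of norm `5` and `√5 Vᵢ⁻¹` represents its conjugate, so `M`
is `√(5ᵗ)⁻¹` times the matrix of a product of `t` such quaternions. A denominator `√(5ˢ)` with
`s < t` would make `5` divide this product. To exclude that, suppose `5 ∣ a * b * r`. As also
`5 = star b * b ∣ star b * b * r`, we get `5 ∣ (a - star b) * (b * r)`. If `a ≠ star b`, then the
norm of `a - star b` is `8` or `16`, which is prime to `5`, hence `5 ∣ b * r`. So letters can be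
removed from the left of a reduced product until only one is left, and `5` does not divide a
quaternion of norm `5`.
-/

section Quaternion

open scoped Quaternion
open Quaternion

section Divisibility

variable {R : Type*} [CommRing R]

theorem coe_dvd_quaternion_iff {n : R} {q : ℍ[R]} :
    (n : ℍ[R]) ∣ q ↔ n ∣ q.re ∧ n ∣ q.imI ∧ n ∣ q.imJ ∧ n ∣ q.imK := by
  constructor
  · rintro ⟨r, rfl⟩
    simp [coe_mul_eq_smul]
  · rintro ⟨⟨a, ha⟩, ⟨b, hb⟩, ⟨c, hc⟩, ⟨d, hd⟩⟩
    have hq : q = n • ⟨a, b, c, d⟩ := Quaternion.ext _ _ ha hb hc hd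
    exact ⟨_, hq.trans (coe_mul_eq_smul n _).symm⟩

theorem coe_dvd_quaternion_of_coe_dvd_mul_left {n : R} {c q : ℍ[R]} (hc : IsCoprime n (normSq c))
    (h : (n : ℍ[R]) ∣ c * q) : (n : ℍ[R]) ∣ q := by
  have hnorm : (n : ℍ[R]) ∣ ((normSq c : R) : ℍ[R]) * q := by
    obtain ⟨r, hr⟩ := h
    refine ⟨star c * r, ?_⟩
    rw [← star_mul_self, mul_assoc, hr, ← mul_assoc, ← coe_commutes, mul_assoc]
  simp only [coe_mul_eq_smul, coe_dvd_quaternion_iff, re_smul, imI_smul, imJ_smul, imK_smul,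
    smul_eq_mul] at hnorm ⊢
  obtain ⟨hre, hi, hj, hk⟩ := hnorm
  exact ⟨hc.dvd_of_dvd_mul_left hre, hc.dvd_of_dvd_mul_left hi, hc.dvd_of_dvd_mul_left hj,
    hc.dvd_of_dvd_mul_left hk⟩

theorem not_coe_dvd_quaternion_of_normSq_eq [IsDomain R] {n : R} (hn₀ : n ≠ 0) (hn : ¬IsUnit n)
    {q : ℍ[R]} (hq : normSq q = n) : ¬(n : ℍ[R]) ∣ q := by
  rintro ⟨r, rfl⟩
  rw [map_mul, normSq_coe, sq, mul_assoc] at hq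
  exact hn (.of_mul_eq_one _ (mul_left_cancel₀ hn₀ (by rw [hq, mul_one])))

theorem not_coe_dvd_quaternion_list_prod [IsDomain R] {n : R} (hn₀ : n ≠ 0) (hn : ¬IsUnit n)
    {l : List ℍ[R]} (hl : ∀ q ∈ l, normSq q = n)
    (hchain : l.IsChain fun a b => IsCoprime n (normSq (a - star b))) :
    ¬(n : ℍ[R]) ∣ l.prod := by
  induction l with
  | nil => simpa [coe_dvd_quaternion_iff, isUnit_iff_dvd_one] using hn
  | cons a l ih =>
    cases l with
    | nil => simpa using not_coe_dvd_quaternion_of_normSq_eq hn₀ hn (hl a (by simp))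
    | cons b l =>
      rw [List.isChain_cons_cons] at hchain
      intro ha
      have hb : (n : ℍ[R]) ∣ star b * (b :: l).prod := by
        rw [List.prod_cons, ← mul_assoc, star_mul_self, hl b (by simp)]
        exact dvd_mul_right _ _
      refine ih (fun q hq => hl q (List.mem_cons_of_mem a hq)) hchain.2
        (coe_dvd_quaternion_of_coe_dvd_mul_left hchain.1 ?_)
      rw [sub_mul, ← List.prod_cons]
      exact dvd_sub ha hb

end Divisibility

/-- The quaternionic basis `iZ`, `iY`, `iX` of the `2 × 2` complex matrices. The Pauli matrices are
taken in reverse order because `(iZ)(iY) = iX`, whereas `(iX)(iY) = -iZ`. -/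
noncomputable def pauliBasis :
    QuaternionAlgebra.Basis (Matrix (Fin 2) (Fin 2) ℂ) (-1 : ℤ) 0 (-1) where
  i := Complex.I • Pauli 2
  j := Complex.I • Pauli 1
  k := Complex.I • Pauli 0
  i_mul_i := by ext i j; fin_cases i <;> fin_cases j <;> simp [Pauli]
  j_mul_j := by ext i j; fin_cases i <;> fin_cases j <;> simp [Pauli]
  i_mul_j := by ext i j; fin_cases i <;> fin_cases j <;> simp [Pauli]
  j_mul_i := by ext i j; fin_cases i <;> fin_cases j <;> simp [Pauli]

/-- The representation of the Lipschitz quaternions (quaternions with integer coordinates) by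
complex matrices that sends `i`, `j`, `k` to `iZ`, `iY`, `iX`. -/
noncomputable def quaternionMatrix : ℍ[ℤ] →ₐ[ℤ] Matrix (Fin 2) (Fin 2) ℂ :=
  pauliBasis.liftHom

theorem quaternionMatrix_apply (q : ℍ[ℤ]) :
    quaternionMatrix q =
      !![q.re + q.imI * Complex.I, -(starRingEnd ℂ) (-q.imJ + q.imK * Complex.I);
        -q.imJ + q.imK * Complex.I, (starRingEnd ℂ) (q.re + q.imI * Complex.I)] := by
  change pauliBasis.lift q = _
  ext i j
  fin_cases i <;> fin_cases j <;>
    simp [QuaternionAlgebra.Basis.lift, pauliBasis, Pauli, Matrix.intCast_apply, add_comm]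

theorem quaternionMatrix_mul_star (q : ℍ[ℤ]) :
    quaternionMatrix q * quaternionMatrix (star q) = ((normSq q : ℤ) : ℂ) • 1 := by
  rw [← map_mul, self_mul_star, ← algebraMap_def, AlgHom.commutes, Int.cast_smul_eq_zsmul,
    Algebra.algebraMap_eq_smul_one]

theorem exists_isGaussian_iff_exists_quaternionMatrix {M : Matrix (Fin 2) (Fin 2) ℂ} {c : ℂ} :
    (∃ u v : ℂ, IsGaussian u ∧ IsGaussian v ∧
      M = c • !![u, -(starRingEnd ℂ) v; v, (starRingEnd ℂ) u]) ↔
    ∃ q : ℍ[ℤ], M = c • quaternionMatrix q := by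
  constructor
  · rintro ⟨_, _, ⟨a, b, rfl⟩, ⟨d, e, rfl⟩, hM⟩
    refine ⟨⟨a, b, -d, e⟩, ?_⟩
    rw [quaternionMatrix_apply ⟨a, b, -d, e⟩]
    simpa using hM
  · rintro ⟨q, hM⟩
    exact ⟨q.re + q.imI * Complex.I, -q.imJ + q.imK * Complex.I, ⟨q.re, q.imI, rfl⟩,
      ⟨-q.imJ, q.imK, by push_cast; rfl⟩, by rwa [quaternionMatrix_apply] at hM⟩

theorem components_eq_of_smul_quaternionMatrix_eq {a b : ℝ} {q r : ℍ[ℤ]}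
    (h : (a : ℂ) • quaternionMatrix q = (b : ℂ) • quaternionMatrix r) :
    a * q.re = b * r.re ∧ a * q.imI = b * r.imI ∧ a * q.imJ = b * r.imJ ∧
      a * q.imK = b * r.imK := by
  have h₀₀ := congrFun₂ h 0 0
  have h₁₀ := congrFun₂ h 1 0
  exact ⟨by simpa [quaternionMatrix_apply] using congrArg Complex.re h₀₀,
    by simpa [quaternionMatrix_apply] using congrArg Complex.im h₀₀,
    by simpa [quaternionMatrix_apply] using congrArg Complex.re h₁₀,
    by simpa [quaternionMatrix_apply] using congrArg Complex.im h₁₀⟩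

theorem prime_dvd_of_inv_sqrt_pow_mul_eq {p : ℕ} (hp : p.Prime) {s t : ℕ} (hst : s < t) {a b : ℤ}
    (h : (√((p : ℝ) ^ t))⁻¹ * a = (√((p : ℝ) ^ s))⁻¹ * b) : (p : ℤ) ∣ a := by
  have hp₀ : (p : ℝ) ≠ 0 := Nat.cast_ne_zero.mpr hp.ne_zero
  obtain ⟨k, rfl⟩ := Nat.exists_eq_add_of_lt hst
  have hsq : (a : ℝ) ^ 2 = p * (p ^ k * b ^ 2) := by
    have hsquares := congrArg (· ^ 2) h
    simp only [mul_pow, inv_pow, Real.sq_sqrt (pow_nonneg p.cast_nonneg _)] at hsquares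
    field_simp at hsquares
    refine mul_right_cancel₀ (pow_ne_zero s hp₀) (hsquares.trans ?_)
    ring
  refine (Nat.prime_iff_prime_int.mp hp).dvd_of_dvd_pow (n := 2) ⟨p ^ k * b ^ 2, ?_⟩
  exact_mod_cast hsq

theorem prime_dvd_quaternion_of_inv_sqrt_pow_smul_eq {p : ℕ} (hp : p.Prime) {s t : ℕ} (hst : s < t)
    {q r : ℍ[ℤ]} (h : ((√((p : ℝ) ^ t) : ℝ) : ℂ)⁻¹ • quaternionMatrix q =
      ((√((p : ℝ) ^ s) : ℝ) : ℂ)⁻¹ • quaternionMatrix r) : Quaternion.coe (p : ℤ) ∣ q := by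
  rw [← Complex.ofReal_inv, ← Complex.ofReal_inv] at h
  obtain ⟨hre, hi, hj, hk⟩ := components_eq_of_smul_quaternionMatrix_eq h
  have descend {a b : ℤ} := prime_dvd_of_inv_sqrt_pow_mul_eq hp hst (a := a) (b := b)
  exact coe_dvd_quaternion_iff.mpr ⟨descend hre, descend hi, descend hj, descend hk⟩

/-- The Lipschitz quaternions `1 + 2k`, `1 + 2j`, `1 + 2i` represented by `√5 V₁`, `√5 V₂`,
`√5 V₃`. -/
def genQuaternion : Fin 3 → ℍ[ℤ] :=
  ![⟨1, 0, 0, 2⟩, ⟨1, 0, 2, 0⟩, ⟨1, 2, 0, 0⟩]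

/-- The Lipschitz quaternion represented by `√5` times `VgenLetter p`; inverse letters correspond
to conjugate quaternions. -/
def letterQuaternion (p : Fin 3 × Bool) : ℍ[ℤ] :=
  if p.2 then genQuaternion p.1 else star (genQuaternion p.1)

theorem normSq_genQuaternion (i : Fin 3) : normSq (genQuaternion i) = 5 := by
  revert i
  simp only [normSq_def']
  decide

theorem normSq_letterQuaternion (p : Fin 3 × Bool) : normSq (letterQuaternion p) = 5 := by
  unfold letterQuaternion
  split_ifs <;> simp [normSq_genQuaternion]

theorem star_letterQuaternion (p : Fin 3 × Bool) :
    star (letterQuaternion p) = letterQuaternion (p.1, !p.2) := by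
  rcases p with ⟨i, _ | _⟩ <;> simp [letterQuaternion]

theorem isCoprime_normSq_letterQuaternion_sub {p q : Fin 3 × Bool} (h : p ≠ q) :
    IsCoprime 5 (normSq (letterQuaternion p - letterQuaternion q)) := by
  revert p q
  simp only [normSq_def', Int.isCoprime_iff_gcd_eq_one]
  decide

theorem Vgen_eq_smul_quaternionMatrix (i : Fin 3) :
    Vgen i = ((√5 : ℝ) : ℂ)⁻¹ • quaternionMatrix (genQuaternion i) := by
  rw [Vgen, quaternionMatrix_apply]
  congr 1
  ext j k
  fin_cases i <;> fin_cases j <;> fin_cases k <;>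
    simp [Pauli, genQuaternion, mul_assoc, Complex.conj_ofNat]

theorem VgenLetter_eq_smul_quaternionMatrix (p : Fin 3 × Bool) :
    VgenLetter p = ((√5 : ℝ) : ℂ)⁻¹ • quaternionMatrix (letterQuaternion p) := by
  rcases p with ⟨i, _ | _⟩
  · have hsqrt : ((√5 : ℝ) : ℂ) * (√5 : ℝ) = 5 := by
      rw [← Complex.ofReal_mul, Real.mul_self_sqrt (by norm_num), Complex.ofReal_ofNat]
    refine Matrix.inv_eq_right_inv ?_
    rw [Vgen_eq_smul_quaternionMatrix, smul_mul_smul_comm, ← mul_inv, hsqrt]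
    simp only [letterQuaternion, Bool.false_eq_true, if_false]
    rw [quaternionMatrix_mul_star, normSq_genQuaternion, Int.cast_ofNat,
      inv_smul_smul₀ (by norm_num)]
  · simp [VgenLetter, letterQuaternion, Vgen_eq_smul_quaternionMatrix]

theorem map_VgenLetter_prod (w : List (Fin 3 × Bool)) :
    (w.map VgenLetter).prod = ((√(5 ^ w.length) : ℝ) : ℂ)⁻¹ •
      quaternionMatrix (w.map letterQuaternion).prod := by
  have hscale : ((√5 : ℝ) : ℂ)⁻¹ ^ w.length = ((√(5 ^ w.length) : ℝ) : ℂ)⁻¹ := by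
    rw [inv_pow, ← Complex.ofReal_pow, ← Real.sqrt_sq (pow_nonneg (Real.sqrt_nonneg 5) w.length),
      ← pow_mul, mul_comm, pow_mul, Real.sq_sqrt (by norm_num)]
  rw [funext VgenLetter_eq_smul_quaternionMatrix, map_list_prod, ← hscale]
  simpa [Function.comp_def] using
    (List.smul_prod ((w.map letterQuaternion).map quaternionMatrix) ((√5 : ℝ) : ℂ)⁻¹).symm

theorem not_five_dvd_map_letterQuaternion_prod {w : List (Fin 3 × Bool)}
    (hred : w.IsChain fun p q => q ≠ (p.1, !p.2)) :
    ¬Quaternion.coe (5 : ℤ) ∣ (w.map letterQuaternion).prod := by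
  refine not_coe_dvd_quaternion_list_prod (by decide) (by decide) ?_ ?_
  · simp only [List.forall_mem_map, normSq_letterQuaternion, implies_true]
  · rw [List.isChain_map]
    refine hred.imp fun p q hpq => ?_
    rw [star_letterQuaternion]
    refine isCoprime_normSq_letterQuaternion_sub ?_
    rintro rfl
    simp at hpq

end Quaternion

theorem stmt3 (t : ℕ) (w : List (Fin 3 × Bool)) (hlen : w.length = t)
    (hred : w.Chain' (fun p q => q ≠ (p.1, !p.2)))
    (M : Matrix (Fin 2) (Fin 2) ℂ) (hM : M = (w.map VgenLetter).prod) :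
    (∃ u v : ℂ, IsGaussian u ∧ IsGaussian v ∧
      M = ((Real.sqrt (5 ^ t) : ℝ) : ℂ)⁻¹ •
        !![u, -(starRingEnd ℂ) v; v, (starRingEnd ℂ) u]) ∧
    ¬ ∃ s : ℕ, s < t ∧ ∃ u' v' : ℂ, IsGaussian u' ∧ IsGaussian v' ∧
      M = ((Real.sqrt (5 ^ s) : ℝ) : ℂ)⁻¹ •
        !![u', -(starRingEnd ℂ) v'; v', (starRingEnd ℂ) u'] := by
  subst hlen hM
  simp only [exists_isGaussian_iff_exists_quaternionMatrix]
  refine ⟨⟨_, map_VgenLetter_prod w⟩, ?_⟩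
  rintro ⟨s, hs, q, hq⟩
  rw [map_VgenLetter_prod] at hq
  exact not_five_dvd_map_letterQuaternion_prod hred
    (prime_dvd_quaternion_of_inv_sqrt_pow_smul_eq Nat.prime_five hs (mod_cast hq))
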